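/- Let P ∈ 𝔽_q[T] be monic irreducible of degree d with i(P) ≠ 0. Then the polynomial Q(T) = P(T^p − T), i.e. the composition of P with T^p − T, is monic irreducible of degree p·d in 𝔽_q[T]. -/

import Mathlib

/-!
In characteristic `p` the trace commutes with `p`-th powers, hence with `x ↦ x ^ p - x`, and this is
used three times. Let `℘ b = b ^ p - b`.

* If `x` is a root of `X ^ p - X - a` in an extension of `K` of degree `m` prime to `p`, taking
  traces gives `℘ (Tr x) = m * a`; as `m ^ p = m` in `K`, `℘ (Tr x / m) = a`. So `X ^ p - X - a` is
  irreducible as soon as `a` is not of the form `℘ b`: each irreducible factor has degree `p`.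
* If a root `x` of the irreducible polynomial `P` were `℘ b` with `b ∈ K(x)`, then
  `℘ (Tr b) = Tr x` would be the negative of the next coefficient of `P`.
* For `b` in a finite extension of `𝔽_p`, `Tr (℘ b) = ℘ (Tr b) = 0`, so an element of nonzero trace
  is not of the form `℘ b`.
-/

open Polynomial
open scoped IntermediateField

section TracePow

variable {R : Type*} [CommRing R] (p : ℕ) [Fact p.Prime] [CharP R p]
  {n : Type*} [Fintype n] [DecidableEq n]

theorem matrix_charpoly_pow_char (M : Matrix n n R) :
    (M ^ p).charpoly = M.charpoly.map (frobenius R p) := by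
  cases isEmpty_or_nonempty n
  · simp
  apply expand_injective (Fact.out : p.Prime).pos
  have hmat : (expand R p : R[X] →+* R[X]).mapMatrix (M ^ p).charmatrix = M.charmatrix ^ p := by
    apply matPolyEquiv.injective
    rw [matPolyEquiv_eq_X_pow_sub_C, C_pow, map_pow, Matrix.matPolyEquiv_charmatrix,
      sub_pow_char_of_commute _ (commute_X _)]
  calc expand R p (M ^ p).charpoly
      = ((expand R p : R[X] →+* R[X]).mapMatrix (M ^ p).charmatrix).det := RingHom.map_det _ _
    _ = M.charpoly ^ p := by rw [hmat, Matrix.det_pow, Matrix.charpoly]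
    _ = expand R p (M.charpoly.map (frobenius R p)) := by
      rw [← map_expand, map_frobenius_expand]

theorem matrix_trace_pow_char (M : Matrix n n R) : (M ^ p).trace = M.trace ^ p := by
  cases isEmpty_or_nonempty n
  · simp [Matrix.trace, (Fact.out : p.Prime).ne_zero]
  rw [Matrix.trace_eq_neg_charpoly_coeff, matrix_charpoly_pow_char, coeff_map, ← map_neg,
    ← Matrix.trace_eq_neg_charpoly_coeff, frobenius_def]

theorem algebra_trace_pow_char {S : Type*} [CommRing S] [Algebra R S] (x : S) :
    Algebra.trace R S (x ^ p) = Algebra.trace R S x ^ p := by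
  classical
  by_cases h : ∃ s : Finset S, Nonempty (Module.Basis s R S)
  · obtain ⟨s, ⟨b⟩⟩ := h
    simp_rw [Algebra.trace_eq_matrix_trace b, map_pow, matrix_trace_pow_char]
  · simp [Algebra.trace_eq_zero_of_not_exists_basis R h, (Fact.out : p.Prime).ne_zero]

theorem algebra_trace_pow_sub_self {S : Type*} [CommRing S] [Algebra R S] (x : S) :
    Algebra.trace R S (x ^ p - x) = Algebra.trace R S x ^ p - Algebra.trace R S x := by
  rw [map_sub, algebra_trace_pow_char]

end TracePow

theorem zmod_trace_pow_sub_self_eq_zero (p : ℕ) [Fact p.Prime] {S : Type*} [CommRing S]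
    [Algebra (ZMod p) S] (x : S) : Algebra.trace (ZMod p) S (x ^ p - x) = 0 := by
  rw [algebra_trace_pow_sub_self, ZMod.pow_card, sub_self]

theorem monic_X_pow_sub_X {R : Type*} [Ring R] {n : ℕ} (hn : 1 < n) : (X ^ n - X : R[X]).Monic :=
  monic_X_pow_sub (degree_X_le.trans_lt (mod_cast hn))

section ArtinSchreier

variable {K : Type*} [Field K] {p : ℕ} [Fact p.Prime] [CharP K p]

theorem exists_pow_sub_self_eq_of_not_dvd_finrank {L : Type*} [CommRing L] [Algebra K L]
    (hL : ¬ p ∣ Module.finrank K L) {a : K} {x : L} (hx : x ^ p - x = algebraMap K L a) :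
    ∃ b : K, b ^ p - b = a := by
  set m : K := ↑(Module.finrank K L)
  have hm : m ≠ 0 := mt (CharP.cast_eq_zero_iff K p _).mp hL
  have hm_pow : m ^ p = m := map_natCast (frobenius K p) _
  have htrace : Algebra.trace K L x ^ p - Algebra.trace K L x = m * a := by
    rw [← algebra_trace_pow_sub_self, hx, Algebra.trace_algebraMap, nsmul_eq_mul]
  refine ⟨Algebra.trace K L x / m, ?_⟩
  rw [div_pow, hm_pow, ← sub_div, htrace, mul_div_cancel_left₀ a hm]

theorem irreducible_X_pow_sub_X_sub_C {a : K} (ha : ∀ b : K, b ^ p - b ≠ a) :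
    Irreducible (X ^ p - X - C a : K[X]) := by
  have hp : p.Prime := Fact.out
  have hdeg : (X ^ p - X - C a : K[X]).natDegree = p := by
    rw [natDegree_sub_C, FiniteField.X_pow_card_sub_X_natDegree_eq K hp.one_lt]
  have hne : (X ^ p - X - C a : K[X]) ≠ 0 :=
    ne_zero_of_natDegree_gt (hdeg.symm ▸ hp.pos)
  have hunit : ¬ IsUnit (X ^ p - X - C a : K[X]) :=
    not_isUnit_of_natDegree_pos _ (hdeg.symm ▸ hp.pos)
  obtain ⟨g, hg, hgdvd⟩ := WfDvdMonoid.exists_irreducible_factor hunit hne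
  suffices p ∣ g.natDegree from
    (associated_of_dvd_of_natDegree_le hgdvd hne
      (hdeg.trans_le (Nat.le_of_dvd hg.natDegree_pos this))).irreducible hg
  by_contra hndvd
  have haeval : aeval (AdjoinRoot.root g) g = 0 := AdjoinRoot.eval₂_root g
  have hroot : AdjoinRoot.root g ^ p - AdjoinRoot.root g = algebraMap K (AdjoinRoot g) a := by
    simpa [sub_eq_zero] using aeval_eq_zero_of_dvd_aeval_eq_zero hgdvd haeval
  have hfinrank : Module.finrank K (AdjoinRoot g) = g.natDegree := by
    rw [(AdjoinRoot.powerBasis hg.ne_zero).finrank, AdjoinRoot.powerBasis_dim]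
  obtain ⟨b, hb⟩ := exists_pow_sub_self_eq_of_not_dvd_finrank (hfinrank ▸ hndvd) hroot
  exact ha b hb

theorem irreducible_comp_X_pow_sub_X {P : K[X]} (hP : P.Monic) (hirr : Irreducible P)
    (hcoeff : ∀ b : K, b ^ p - b ≠ P.nextCoeff) : Irreducible (P.comp (X ^ p - X)) := by
  have hp : p.Prime := Fact.out
  refine irreducible_comp hP (monic_X_pow_sub_X hp.one_lt) hirr fun E _ _ x hx => ?_
  have hint : IsIntegral K x := minpoly.ne_zero_iff.mp (hx ▸ hirr.ne_zero)
  have := charP_of_injective_algebraMap (algebraMap K K⟮x⟯).injective p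
  rw [Polynomial.map_sub, Polynomial.map_pow, map_X]
  refine irreducible_X_pow_sub_X_sub_C fun b hb => hcoeff (-Algebra.trace K K⟮x⟯ b) ?_
  have hneg : (-Algebra.trace K K⟮x⟯ b) ^ p = -Algebra.trace K K⟮x⟯ b ^ p :=
    map_neg (frobenius K p) _
  have htrace : Algebra.trace K K⟮x⟯ b ^ p - Algebra.trace K K⟮x⟯ b = -P.nextCoeff := by
    rw [← algebra_trace_pow_sub_self, hb, trace_adjoinSimpleGen hint, hx]
  linear_combination hneg - htrace

theorem stmt_3_general {P : K[X]} (hP : P.Monic) (hirr : Irreducible P)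
    (hcoeff : ∀ b : K, b ^ p - b ≠ P.nextCoeff) :
    (P.comp (X ^ p - X)).Monic ∧ Irreducible (P.comp (X ^ p - X)) ∧
      (P.comp (X ^ p - X)).natDegree = p * P.natDegree := by
  have hp : p.Prime := Fact.out
  have hdeg : (X ^ p - X : K[X]).natDegree = p :=
    FiniteField.X_pow_card_sub_X_natDegree_eq K hp.one_lt
  refine ⟨hP.comp (monic_X_pow_sub_X hp.one_lt) (hdeg.symm ▸ hp.ne_zero),
    irreducible_comp_X_pow_sub_X hP hirr hcoeff, ?_⟩
  rw [natDegree_comp, hdeg, mul_comm]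

end ArtinSchreier

/-- Let `P ∈ 𝔽_q[T]` be monic irreducible of degree `d` with `i(P) ≠ 0`, where
`i(P) = Tr_{𝔽_q/𝔽_p}(P.nextCoeff)`. Then `Q(T) = P(T^p − T)` is monic irreducible of degree
`p·d` in `𝔽_q[T]`. -/
theorem stmt_3 (p s : ℕ) [Fact p.Prime] (F : Type*) [Field F] [Fintype F]
    [Algebra (ZMod p) F] (hq : Fintype.card F = p ^ s)
    (P : Polynomial F) (hP : P.Monic) (hirr : Irreducible P) (d : ℕ) (hd : P.natDegree = d)
    (hi : Algebra.trace (ZMod p) F P.nextCoeff ≠ 0) :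
    (P.comp (Polynomial.X ^ p - Polynomial.X)).Monic ∧
      Irreducible (P.comp (Polynomial.X ^ p - Polynomial.X)) ∧
      (P.comp (Polynomial.X ^ p - Polynomial.X)).natDegree = p * d := by
  have := charP_of_injective_algebraMap (algebraMap (ZMod p) F).injective p
  exact hd ▸ stmt_3_general hP hirr fun b hb => hi (hb ▸ zmod_trace_pow_sub_self_eq_zero p b)
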